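/- Let n ≥ 11 be odd and let x ∈ ZMod n have additive order n. Define the sequence L : Fin ((n−1)/2) → ZMod n consisting of (n−5)/2 terms equal to 2 • x and 2 terms equal to 3 • x. Then L is zero-sum free, and for every g ∈ ZMod n of additive order n, L is not signed g-smooth. -/

import Mathlib

/-!
Write `n = 2k + 5` with `k ≥ 3`, so that `L` has `k` terms `2x` and two terms `3x`.

Zero-sum freeness: with the integer weights `2` and `3` the total weight is `n + 1`. A nonempty
zero-sum subsequence has weight a positive multiple of `n`, hence exactly `n`, so its complement
has weight `1`, which is impossible since all weights are at least `2`.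

Non-smoothness: let `mᵢ` be the integers of a signed `g`-smooth representation. Two indices with
the same term of `L` carry the same sign, since otherwise `mᵢ + mⱼ` would be a multiple of `n`
strictly between `0` and `n`; they therefore have equal `mᵢ` (`eq_of_same_term`). Hence `m` takes
the value `a` on the `k` terms `2x` and `b` on the two terms `3x`, with `k a + 2 b < n` and, from
`3 (2x) = 2 (3x)`, `n ∣ 3 a ± 2 b`. By `1`-smoothness some `mᵢ` is `1`, so `a = 1` or `b = 1`, and
both cases are excluded by size and parity (`no_pair`).
-/

/-- A nonempty sequence of positive integers is `1`-smooth if the set of sums of its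
nonempty subsequences equals the integer interval `[1, total sum]`. -/
def IsOneSmooth {ℓ : ℕ} (T : Fin ℓ → ℤ) : Prop :=
  {s : ℤ | ∃ S : Finset (Fin ℓ), S.Nonempty ∧ ∑ i ∈ S, T i = s} = Set.Icc 1 (∑ i, T i)

/-- A sequence over `ZMod n` is zero-sum free if no nonempty subsequence sums to `0`. -/
def ZeroSumFree {n ℓ : ℕ} (T : Fin ℓ → ZMod n) : Prop :=
  ∀ S : Finset (Fin ℓ), S.Nonempty → ∑ i ∈ S, T i ≠ 0

/-- A sequence over `ZMod n` is `g`-smooth if its terms are `mᵢ • g` for positive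
integers `mᵢ` with `∑ mᵢ < n` such that the integer sequence `(mᵢ)` is `1`-smooth. -/
def IsGSmooth {n ℓ : ℕ} (g : ZMod n) (T : Fin ℓ → ZMod n) : Prop :=
  ∃ m : Fin ℓ → ℤ, (∀ i, 1 ≤ m i) ∧ (∀ i, T i = m i • g) ∧
    (∑ i, m i) < (n : ℤ) ∧ IsOneSmooth m

/-- A sequence over `ZMod n` is signed `g`-smooth if after multiplying each term by a
sign `±1` it becomes `g`-smooth. -/
def IsSignedGSmooth {n ℓ : ℕ} (g : ZMod n) (T : Fin ℓ → ZMod n) : Prop :=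
  ∃ ε : Fin ℓ → ℤ, (∀ i, ε i = 1 ∨ ε i = -1) ∧ IsGSmooth g (fun i => ε i • T i)

/-- The arithmetic core: no two-valued integer sequence can realise `L` up to signs. -/
lemma no_pair (k : ℕ) (hk : 3 ≤ k) (a b : ℤ) (ha : 1 ≤ a) (hb : 1 ≤ b)
    (hsum : (k : ℤ) * a + 2 * b < 2 * k + 5) (h1 : a = 1 ∨ b = 1)
    (hdvd : (2 * k + 5 : ℤ) ∣ 3 * a - 2 * b ∨ (2 * k + 5 : ℤ) ∣ 3 * a + 2 * b) : False := by
  have hk' : (3 : ℤ) ≤ k := by exact_mod_cast hk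
  rcases h1 with rfl | rfl
  · rcases hdvd with h | h
    · have := Int.eq_zero_of_abs_lt_dvd h (by rw [abs_lt]; constructor <;> linarith)
      omega
    · have := Int.le_of_dvd (by linarith) h
      linarith
  · have ha2 : a ≤ 2 := by
      by_contra hcon
      have : 3 ≤ a := by omega
      nlinarith
    rcases hdvd with h | h
    · have := Int.le_of_dvd (by linarith) h
      linarith
    · have := Int.le_of_dvd (by linarith) h
      linarith

/-- Equal terms of the original sequence get equal integers in a signed representation whose
total is less than the order of `g`. -/
lemma eq_of_same_term {n ℓ : ℕ} {g y : ZMod n} (hg : addOrderOf g = n) {ε m : Fin ℓ → ℤ}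
    (hε : ∀ i, ε i = 1 ∨ ε i = -1) (hm : ∀ i, 1 ≤ m i) (hsum : ∑ i, m i < (n : ℤ))
    {i j : Fin ℓ} (hi : ε i • y = m i • g) (hj : ε j • y = m j • g) : m i = m j := by
  by_cases hij : i = j
  · rw [hij]
  have hle : m i + m j ≤ ∑ i, m i := by
    rw [← Finset.sum_pair hij]
    exact Finset.sum_le_sum_of_subset_of_nonneg (Finset.subset_univ _)
      fun t _ _ => by linarith [hm t]
  have hmi := hm i
  have hmj := hm j
  have key : ∀ z : ℤ, z • g = 0 → (n : ℤ) ∣ z := fun z hz => by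
    have := addOrderOf_dvd_iff_zsmul_eq_zero.mpr hz
    rwa [hg] at this
  have same : m i • g = m j • g → m i = m j := fun h => by
    have hd := key (m i - m j) (by rw [sub_smul, h, sub_self])
    have := Int.eq_zero_of_abs_lt_dvd hd (by rw [abs_lt]; constructor <;> linarith)
    linarith
  have opp : m i • g + m j • g = 0 → m i = m j := fun h => by
    have hd := key (m i + m j) (by rw [add_smul, h])
    have := Int.le_of_dvd (by linarith) hd
    linarith
  rcases hε i with h | h <;> rcases hε j with h' | h' <;> rw [h] at hi <;> rw [h'] at hj
  · exact same (hi ▸ hj ▸ rfl)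
  · exact opp (by rw [← hi, ← hj]; simp)
  · exact opp (by rw [← hi, ← hj]; simp)
  · exact same (hi ▸ hj ▸ rfl)

lemma sum_two_valued {M : Type*} [AddCommMonoid M] (k : ℕ) (a b : M) :
    ∑ i : Fin (k + 2), (if (i : ℕ) < k then a else b) = k • a + 2 • b := by
  rw [Fin.sum_univ_eq_sum_range (fun i => if i < k then a else b), Finset.sum_range_succ,
    Finset.sum_range_succ, Finset.sum_congr rfl
      (fun i hi => if_pos (Finset.mem_range.mp hi) : ∀ i ∈ Finset.range k, _ = a)]
  simp [two_nsmul, add_assoc]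

lemma zeroSumFree_aux (k : ℕ) (hk : 3 ≤ k) (x : ZMod (2 * k + 5))
    (hx : addOrderOf x = 2 * k + 5) (L : Fin (k + 2) → ZMod (2 * k + 5))
    (hL : ∀ i, L i = if (i : ℕ) < k then 2 • x else 3 • x) : ZeroSumFree L := by
  intro S hS h0
  set w : Fin (k + 2) → ℕ := fun i => if (i : ℕ) < k then 2 else 3 with hw
  have hLw : ∀ i, L i = w i • x := fun i => by
    rw [hL, hw]
    dsimp only
    split_ifs <;> rfl
  have hw2 : ∀ T : Finset (Fin (k + 2)), T.Nonempty → 2 ≤ ∑ i ∈ T, w i := by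
    rintro T ⟨i, hi⟩
    have h1 : w i ≤ ∑ i ∈ T, w i := Finset.single_le_sum (fun _ _ => Nat.zero_le _) hi
    have h2 : 2 ≤ w i := by rw [hw]; dsimp only; split_ifs <;> omega
    omega
  have hd : 2 * k + 5 ∣ ∑ i ∈ S, w i := by
    rw [← hx, addOrderOf_dvd_iff_nsmul_eq_zero, Finset.sum_smul, ← h0]
    exact Finset.sum_congr rfl fun i _ => (hLw i).symm
  have htot : ∑ i ∈ S, w i + ∑ i ∈ Sᶜ, w i = 2 * k + 6 := by
    rw [Finset.sum_add_sum_compl, hw, sum_two_valued]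
    simp only [smul_eq_mul]
    ring
  have hS2 := hw2 S hS
  have hle := Nat.le_of_dvd (by omega) hd
  -- The multiple of `n` cannot be `n + 1`.
  have hne : ∑ i ∈ S, w i ≠ 2 * k + 6 := fun h => by
    rw [h] at hd
    have := (Nat.dvd_add_right (dvd_refl (2 * k + 5))).mp (show 2 * k + 5 ∣ 2 * k + 5 + 1 from hd)
    have := Nat.le_of_dvd one_pos this
    omega
  rcases Finset.eq_empty_or_nonempty Sᶜ with he | he
  · rw [he, Finset.sum_empty] at htot
    omega
  · have := hw2 _ he
    omega

lemma not_signed_aux (k : ℕ) (hk : 3 ≤ k) (x : ZMod (2 * k + 5))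
    (L : Fin (k + 2) → ZMod (2 * k + 5))
    (hL : ∀ i, L i = if (i : ℕ) < k then 2 • x else 3 • x) (g : ZMod (2 * k + 5))
    (hg : addOrderOf g = 2 * k + 5) : ¬ IsSignedGSmooth g L := by
  rintro ⟨ε, hε, m, hm, hmg, hsum, hsmooth⟩
  dsimp only at hmg
  let i₀ : Fin (k + 2) := ⟨0, by omega⟩
  let j₀ : Fin (k + 2) := ⟨k, by omega⟩
  have hA : ∀ i : Fin (k + 2), (i : ℕ) < k → ε i • (2 • x) = m i • g := fun i hi => by
    rw [← hmg, hL, if_pos hi]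
  have hB : ∀ i : Fin (k + 2), ¬ (i : ℕ) < k → ε i • (3 • x) = m i • g := fun i hi => by
    rw [← hmg, hL, if_neg hi]
  have hi₀ : (i₀ : ℕ) < k := by show 0 < k; omega
  have hj₀ : ¬ (j₀ : ℕ) < k := lt_irrefl k
  have hval : ∀ i, m i = if (i : ℕ) < k then m i₀ else m j₀ := fun i => by
    split_ifs with hi
    · exact eq_of_same_term hg hε hm hsum (hA i hi) (hA i₀ hi₀)
    · exact eq_of_same_term hg hε hm hsum (hB i hi) (hB j₀ hj₀)
  have hS : ∑ i, m i = k * m i₀ + 2 * m j₀ := by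
    rw [Finset.sum_congr rfl fun i _ => hval i, sum_two_valued]
    simp
  have hone : m i₀ = 1 ∨ m j₀ = 1 := by
    have hmem : (1 : ℤ) ∈ Set.Icc 1 (∑ i, m i) := by
      refine ⟨le_refl _, (hm i₀).trans ?_⟩
      exact Finset.single_le_sum (fun t _ => by linarith [hm t]) (Finset.mem_univ i₀)
    rw [← hsmooth] at hmem
    obtain ⟨S, ⟨i, hi⟩, hs⟩ := hmem
    have hle : m i ≤ ∑ i ∈ S, m i :=
      Finset.single_le_sum (fun t _ => by linarith [hm t]) hi
    have h1 : m i = 1 := by linarith [hm i]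
    have hv := hval i
    split_ifs at hv
    · left; linarith
    · right; linarith
  have key : ∀ z : ℤ, z • g = 0 → (2 * k + 5 : ℤ) ∣ z := fun z hz => by
    have := addOrderOf_dvd_iff_zsmul_eq_zero.mpr hz
    rw [hg] at this
    exact_mod_cast this
  have ha := hA i₀ hi₀
  have hb := hB j₀ hj₀
  refine no_pair k hk (m i₀) (m j₀) (hm _) (hm _) ?_ hone ?_
  · rw [← hS]
    exact_mod_cast hsum
  · have e1 : (3 * m i₀ - 2 * m j₀) • g = 3 • (ε i₀ • (2 • x)) - 2 • (ε j₀ • (3 • x)) := by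
      rw [ha, hb]; module
    have e2 : (3 * m i₀ + 2 * m j₀) • g = 3 • (ε i₀ • (2 • x)) + 2 • (ε j₀ • (3 • x)) := by
      rw [ha, hb]; module
    rcases hε i₀ with h | h <;> rcases hε j₀ with h' | h' <;> rw [h, h'] at e1 e2
    · exact Or.inl (key _ (e1.trans (by module)))
    · exact Or.inr (key _ (e2.trans (by module)))
    · exact Or.inr (key _ (e2.trans (by module)))
    · exact Or.inl (key _ (e1.trans (by module)))

theorem stmt14 (n : ℕ) (hn : 11 ≤ n) (hodd : Odd n) (x : ZMod n)
    (hx : addOrderOf x = n) (L : Fin ((n - 1) / 2) → ZMod n)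
    (hL : ∀ i : Fin ((n - 1) / 2), L i = if (i : ℕ) < (n - 5) / 2 then 2 • x else 3 • x) :
    ZeroSumFree L ∧ ∀ g : ZMod n, addOrderOf g = n → ¬ IsSignedGSmooth g L := by
  obtain ⟨k, rfl⟩ : ∃ k, n = 2 * k + 5 := by
    obtain ⟨r, hr⟩ := hodd
    exact ⟨r - 2, by omega⟩
  have hlen : (2 * k + 5 - 1) / 2 = k + 2 := by omega
  have hk5 : (2 * k + 5 - 5) / 2 = k := by omega
  rw [hk5] at hL
  clear hk5
  generalize (2 * k + 5 - 1) / 2 = ℓ at L hL hlen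
  subst hlen
  exact ⟨zeroSumFree_aux k (by omega) x hx L hL,
    fun g hg => not_signed_aux k (by omega) x L hL g hg⟩
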